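/- Let n ≥ 1 be an integer and let ρ be an irreducible finite-dimensional complex representation of SL(2, ℤ/nℤ). If ρ(t) has exactly three distinct eigenvalues, then ρ is three-dimensional. -/

import Mathlib

/-- The group `SL(2, ℤ/nℤ)`. -/
abbrev SL2 (n : ℕ) := Matrix.SpecialLinearGroup (Fin 2) (ZMod n)

/-- The element `t = [[1,1],[0,1]]` of `SL(2, ℤ/nℤ)`. -/
def tGen (n : ℕ) : SL2 n := ⟨!![1, 1; 0, 1], by simp [Matrix.det_fin_two_of]⟩

/-- A representation is irreducible if the space is nonzero and the only invariant
subspaces are `⊥` and `⊤`. -/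
def IsIrreducibleRep {G V : Type} [Group G] [AddCommGroup V] [Module ℂ V]
    (ρ : Representation ℂ G V) : Prop :=
  Nontrivial V ∧ ∀ p : Submodule ℂ V, (∀ g : G, p.map (ρ g) ≤ p) → p = ⊥ ∨ p = ⊤

/-! The elements `x = t` and `y = [[1, 0], [-1, 1]]` generate `SL(2, ℤ/nℤ)` and satisfy the braid
relation `x y x = y x y`, so `ρ` is an irreducible representation of the braid group on three
strands. Put `Δ = x y x`; then `Δ²` is central, hence a scalar. If `v` is an eigenvector of `x`,
then `v`, `Δ v`, `x Δ v`, `x⁻¹ Δ v` span a subspace stable under `Δ` (because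
`Δ x Δ = Δ² x⁻¹ Δ x⁻¹` and `Δ x⁻¹ Δ = x Δ x`) and under `x` (which satisfies a cubic equation), so
they span `V`. For the eigenvalue `λ` of `v`, the operator `x - λ` kills `v`, and `x` satisfies a
quadratic equation on the range of `x - λ`; hence this range is spanned by `w` and `x⁻¹ w`, where
`w = (x - λ) Δ v`. So each of the three eigenspaces of `x` has codimension at most two, and as they
are independent, `3 (dim V - 2) ≤ dim V`. -/

open Module Subgroup

section Braid

variable {G : Type*} [Group G] {x y : G}

/-- The Garside element `Δ = x y x` (half twist) of a pair `x, y`, used when `x y x = y x y`. -/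
def garside (x y : G) : G := x * y * x

lemma closure_garside (x y : G) : Subgroup.closure {x, garside x y} = Subgroup.closure {x, y} := by
  have hx : x ∈ Subgroup.closure {x, garside x y} := subset_closure (by simp)
  have hy : x⁻¹ * garside x y * x⁻¹ ∈ Subgroup.closure {x, garside x y} :=
    mul_mem (mul_mem (inv_mem hx) (subset_closure (by simp))) (inv_mem hx)
  have hx' : x ∈ Subgroup.closure {x, y} := subset_closure (by simp)
  have hΔ : garside x y ∈ Subgroup.closure {x, y} :=
    mul_mem (mul_mem hx' (subset_closure (by simp))) hx'
  rw [show x⁻¹ * garside x y * x⁻¹ = y by simp [garside, mul_assoc]] at hy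
  exact le_antisymm ((closure_le _).2 <| Set.pair_subset hx' hΔ)
    ((closure_le _).2 <| Set.pair_subset hx hy)

lemma semiconjBy_garside_left (h : x * y * x = y * x * y) : SemiconjBy (garside x y) x y := by
  simp only [SemiconjBy, garside, h, mul_assoc]

lemma semiconjBy_garside_right (h : x * y * x = y * x * y) : SemiconjBy (garside x y) y x := by
  simp only [SemiconjBy, garside, mul_assoc] at h ⊢
  rw [h]

lemma garside_sq_mem_center (h : x * y * x = y * x * y) (hgen : Subgroup.closure {x, y} = ⊤) :
    garside x y ^ 2 ∈ center G := by
  have hx := (semiconjBy_garside_right h).mul_left (semiconjBy_garside_left h)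
  have hy := (semiconjBy_garside_left h).mul_left (semiconjBy_garside_right h)
  rw [← sq] at hx hy
  have hle : Subgroup.closure {x, y} ≤ centralizer {garside x y ^ 2} :=
    (closure_le _).2 <| Set.pair_subset (mem_centralizer_singleton_iff.2 hx.symm)
      (mem_centralizer_singleton_iff.2 hy.symm)
  rw [hgen, top_le_iff, centralizer_eq_top_iff_subset] at hle
  exact hle rfl

lemma garside_mul_self_mul_garside (h : x * y * x = y * x * y) :
    garside x y * x * garside x y = x⁻¹ * garside x y * x⁻¹ * garside x y ^ 2 := by
  rw [(semiconjBy_garside_left h).eq, sq]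
  simp [garside, mul_assoc]

lemma garside_mul_inv_mul_garside (h : x * y * x = y * x * y) :
    garside x y * x⁻¹ * garside x y = x * garside x y * x := by
  calc garside x y * x⁻¹ * garside x y = x * (y * x * y) * x := by simp [garside, mul_assoc]
    _ = x * garside x y * x := by rw [← h, garside]

end Braid

section Representation

variable {K G V : Type*} [Field K] [Group G] [AddCommGroup V] [Module K V]

lemma map_le_of_closure_eq_top [FiniteDimensional K V] (ρ : Representation K G V)
    {S : Set G} (hS : Subgroup.closure S = ⊤) {W : Submodule K V}
    (hW : ∀ s ∈ S, W.map (ρ s) ≤ W) (g : G) : W.map (ρ g) ≤ W := by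
  have hg : g ∈ Subgroup.closure S := hS ▸ mem_top g
  induction hg using closure_induction with
  | mem s hs => exact hW s hs
  | one => simp [End.one_eq_id]
  | mul g h _ _ hg hh =>
    rw [map_mul, End.mul_eq_comp, Submodule.map_comp]
    exact (Submodule.map_mono hh).trans hg
  | inv g _ hg =>
    have hmap : W.map (ρ g) = W := Submodule.eq_of_le_of_finrank_eq hg
      (Submodule.equivMapOfInjective _ (ρ.apply_bijective g).injective W).finrank_eq.symm
    rintro _ ⟨w, hw, rfl⟩
    obtain ⟨w', hw', rfl⟩ := hmap.ge hw
    simpa using hw'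

lemma span_eq_top_of_closure_eq_top [FiniteDimensional K V] (ρ : Representation K G V)
    [ρ.IsIrreducible] {S : Set G} (hS : Subgroup.closure S = ⊤) {B : Set V}
    (hB : ∀ s ∈ S, ∀ b ∈ B, ρ s b ∈ Submodule.span K B) {v : V} (hv : v ∈ B) (hv0 : v ≠ 0) :
    Submodule.span K B = ⊤ := by
  have hW : ∀ s ∈ S, (Submodule.span K B).map (ρ s) ≤ Submodule.span K B := fun s hs => by
    rw [Submodule.map_span_le]
    exact hB s hs
  let σ : Subrepresentation ρ :=
    ⟨Submodule.span K B, fun g _ hw =>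
      map_le_of_closure_eq_top ρ hS hW g (Submodule.mem_map_of_mem hw)⟩
  rcases eq_bot_or_eq_top σ with h | h
  · have hmem : v ∈ σ.toSubmodule := Submodule.subset_span hv
    rw [h] at hmem
    exact absurd hmem hv0
  · exact congrArg Subrepresentation.toSubmodule h

lemma inv_apply_of_hasEigenvector (ρ : Representation K G V) {x : G} {α : K} {v : V}
    (hv : End.HasEigenvector (ρ x) α v) : ρ x⁻¹ v = α⁻¹ • v := by
  have hα : α ≠ 0 := by
    rintro rfl
    exact hv.2 ((ρ.apply_bijective x).injective (by simpa using hv.apply_eq_smul))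
  rw [eq_inv_smul_iff₀ hα, ← map_smul, ← hv.apply_eq_smul, ρ.inv_self_apply]

lemma exists_apply_eq_smul_of_mem_center [IsAlgClosed K] [FiniteDimensional K V]
    (ρ : Representation K G V) [ρ.IsIrreducible] {z : G} (hz : z ∈ center G) :
    ∃ c : K, ∀ v, ρ z v = c • v := by
  obtain ⟨c, hc⟩ :=
    (Representation.IsIrreducible.algebraMap_intertwiningMap_bijective_of_isAlgClosed (ρ := ρ)).2
      (.centralMul ρ z hz)
  exact ⟨c, fun v => (congrArg (fun f : ρ.IntertwiningMap ρ => f v) hc).symm⟩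

end Representation

section Spectrum

variable {K V : Type*} [Field K] [AddCommGroup V] [Module K V]

lemma isSemisimple_of_pow_eq_one {f : End K V} {m : ℕ} (hm : (m : K) ≠ 0) (hf : f ^ m = 1) :
    f.IsSemisimple :=
  End.isSemisimple_of_squarefree_aeval_eq_zero
    (Polynomial.separable_X_pow_sub_C 1 hm one_ne_zero).squarefree (by simp [hf])

lemma iSup_mem_spectrum_eigenspace [FiniteDimensional K V] [IsAlgClosed K] {f : End K V}
    (hf : f.IsSemisimple) : ⨆ μ ∈ spectrum K f, f.eigenspace μ = ⊤ := by
  rw [eq_top_iff, ← hf.iSup_eigenspace_eq_top]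
  refine iSup_le fun μ => ?_
  by_cases hμ : f.HasEigenvalue μ
  · exact le_iSup₂_of_le μ hμ.mem_spectrum le_rfl
  · rw [End.HasEigenvalue, End.HasUnifEigenvalue, not_not] at hμ
    exact hμ.trans_le bot_le

lemma ncard_spectrum_le_finrank [FiniteDimensional K V] (f : End K V) :
    (spectrum K f).ncard ≤ finrank K V := by
  classical
  have hroots : spectrum K f = f.charpoly.roots.toFinset := by
    ext μ
    simp [End.mem_spectrum_iff_isRoot_charpoly, f.charpoly_monic.ne_zero]
  rw [hroots, Set.ncard_coe_finset, ← f.charpoly_natDegree]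
  exact (Multiset.toFinset_card_le _).trans (Polynomial.card_roots' _)

lemma mul_sub_algebraMap_eq_zero_of_spectrum_eq [FiniteDimensional K V] [IsAlgClosed K]
    {f : End K V} (hf : f.IsSemisimple) {α β γ : K} (hspec : spectrum K f = {α, β, γ}) :
    (f - algebraMap K _ β) * (f - algebraMap K _ γ) * (f - algebraMap K _ α) = 0 := by
  rw [← LinearMap.ker_eq_top, eq_top_iff, ← iSup_mem_spectrum_eigenspace hf, hspec]
  refine iSup₂_le fun μ hμ v hv => ?_
  have hv' : ((f - algebraMap K _ β) * (f - algebraMap K _ γ) * (f - algebraMap K _ α)) v =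
      ((μ - β) * (μ - γ) * (μ - α)) • v := by
    simp only [End.mul_apply, LinearMap.sub_apply, Module.algebraMap_end_apply, map_sub, map_smul,
      End.mem_eigenspace_iff.1 hv]
    module
  rw [LinearMap.mem_ker, hv']
  rcases hμ with rfl | rfl | rfl <;> simp

lemma sum_finrank_eigenspace_le_finrank [FiniteDimensional K V] (f : End K V) (s : Finset K) :
    ∑ μ ∈ s, finrank K (f.eigenspace μ) ≤ finrank K V := by
  classical
  have hind : iSupIndep fun μ : s => f.eigenspace μ :=
    f.eigenspaces_iSupIndep.comp Subtype.val_injective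
  rw [← Finset.sum_coe_sort, ← finrank_directSum]
  exact LinearMap.finrank_le_finrank_of_injective hind.dfinsupp_lsum_injective

end Spectrum

section ThreeEigenvalues

variable {K G V : Type*} [Field K] [IsAlgClosed K] [Group G] [AddCommGroup V] [Module K V]
  [FiniteDimensional K V]

lemma span_garside_orbit_eq_top (ρ : Representation K G V) [ρ.IsIrreducible] {x y : G}
    (hxy : x * y * x = y * x * y) (hgen : Subgroup.closure {x, y} = ⊤)
    (hx : ∀ w, ρ x (ρ x w) ∈ Submodule.span K {w, ρ x w, ρ x⁻¹ w}) {α : K} {v : V}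
    (hv : End.HasEigenvector (ρ x) α v) :
    Submodule.span K {v, ρ (garside x y) v, ρ x (ρ (garside x y) v),
      ρ x⁻¹ (ρ (garside x y) v)} = ⊤ := by
  obtain ⟨c, hc⟩ := exists_apply_eq_smul_of_mem_center ρ (garside_sq_mem_center hxy hgen)
  have hxv : ρ x v = α • v := hv.apply_eq_smul
  set Δ := garside x y with hΔ
  set u := ρ Δ v with hu
  have hΔu : ρ Δ u = c • v := by
    rw [← hc, sq, map_mul, End.mul_apply]
  have hΔxu : ρ Δ (ρ x u) = (c * α⁻¹) • ρ x⁻¹ u := by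
    have := congrArg (fun g => ρ g v) (garside_mul_self_mul_garside hxy)
    simpa only [map_mul, End.mul_apply, ← hΔ, ← hu, hc, inv_apply_of_hasEigenvector ρ hv, map_smul,
      smul_smul] using this
  have hΔxu' : ρ Δ (ρ x⁻¹ u) = α • ρ x u := by
    have := congrArg (fun g => ρ g v) (garside_mul_inv_mul_garside hxy)
    simpa only [map_mul, End.mul_apply, ← hΔ, ← hu, hxv, map_smul] using this
  refine span_eq_top_of_closure_eq_top ρ ((closure_garside x y).trans hgen) ?_
    (Set.mem_insert v _) hv.2
  have hmem {w : V} (hw : w ∈ ({v, u, ρ x u, ρ x⁻¹ u} : Set V)) :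
      w ∈ Submodule.span K {v, u, ρ x u, ρ x⁻¹ u} := Submodule.subset_span hw
  rintro s (rfl | rfl) w (rfl | rfl | rfl | rfl)
  · exact hxv ▸ Submodule.smul_mem _ _ (hmem (by simp))
  · exact hmem (by simp)
  · exact Submodule.span_mono (Set.subset_insert _ _) (hx u)
  · exact hmem (by simp)
  · exact hmem (by simp [u, Δ])
  · exact hΔu ▸ Submodule.smul_mem _ _ (hmem (by simp))
  · exact hΔxu ▸ Submodule.smul_mem _ _ (hmem (by simp))
  · exact hΔxu' ▸ Submodule.smul_mem _ _ (hmem (by simp))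

lemma exists_range_sub_algebraMap_le_span_pair (ρ : Representation K G V) [ρ.IsIrreducible]
    {x y : G} (hxy : x * y * x = y * x * y) (hgen : Subgroup.closure {x, y} = ⊤) {α β γ : K}
    (hx : (ρ x - algebraMap K _ β) * (ρ x - algebraMap K _ γ) * (ρ x - algebraMap K _ α) = 0)
    (hα : End.HasEigenvalue (ρ x) α) :
    ∃ w, LinearMap.range (ρ x - algebraMap K _ α) ≤ Submodule.span K {w, ρ x⁻¹ w} := by
  obtain ⟨v, hv⟩ := hα.exists_hasEigenvector
  set f : End K V := ρ x - algebraMap K _ α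
  have hf_apply (z : V) : f z = ρ x z - α • z := rfl
  have hfx (z : V) : f (ρ x z) = ρ x (f z) := by simp [hf_apply]
  have hfx_inv (z : V) : f (ρ x⁻¹ z) = ρ x⁻¹ (f z) := by simp [hf_apply]
  have hxf (z : V) : ρ x (f z) = (β + γ) • f z + (-(β * γ)) • ρ x⁻¹ (f z) := by
    have h := congrArg (ρ x⁻¹) (LinearMap.congr_fun hx z)
    simp only [End.mul_apply, LinearMap.sub_apply, Module.algebraMap_end_apply, map_sub, map_smul,
      ρ.inv_self_apply, LinearMap.zero_apply, map_zero] at h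
    rw [← sub_eq_zero, ← h]
    module
  have hcubic (z : V) : ρ x (ρ x z) ∈ Submodule.span K {z, ρ x z, ρ x⁻¹ z} := by
    have h := hxf z
    simp only [hf_apply, map_sub, map_smul, ρ.inv_self_apply] at h
    rw [sub_eq_iff_eq_add.1 h]
    exact Submodule.mem_span_triple.2
      ⟨-(α * β + α * γ + β * γ), α + β + γ, α * β * γ, by module⟩
  refine ⟨f (ρ (garside x y) v), ?_⟩
  rw [LinearMap.range_eq_map, ← span_garside_orbit_eq_top ρ hxy hgen hcubic hv,
    Submodule.map_span_le]
  rintro _ (rfl | rfl | rfl | rfl)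
  · simp [hf_apply, hv.apply_eq_smul]
  · exact Submodule.subset_span (by simp)
  · exact hfx _ ▸ hxf _ ▸ Submodule.mem_span_pair.2 ⟨_, _, rfl⟩
  · exact hfx_inv _ ▸ Submodule.subset_span (by simp)

lemma finrank_le_finrank_eigenspace_add_two (ρ : Representation K G V) [ρ.IsIrreducible]
    {x y : G} (hxy : x * y * x = y * x * y) (hgen : Subgroup.closure {x, y} = ⊤)
    (hss : End.IsSemisimple (ρ x)) {α β γ : K} (hspec : spectrum K (ρ x) = {α, β, γ}) :
    finrank K V ≤ finrank K (End.eigenspace (ρ x) α) + 2 := by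
  classical
  have hα : End.HasEigenvalue (ρ x) α := End.hasEigenvalue_iff_mem_spectrum.2 (by simp [hspec])
  obtain ⟨w, hw⟩ := exists_range_sub_algebraMap_le_span_pair ρ hxy hgen
    (mul_sub_algebraMap_eq_zero_of_spectrum_eq hss hspec) hα
  have hrank : finrank K (LinearMap.range (ρ x - algebraMap K _ α)) ≤ 2 := by
    refine (Submodule.finrank_mono hw).trans ?_
    rw [← Finset.coe_pair]
    exact (finrank_span_finset_le_card _).trans Finset.card_le_two
  rw [End.eigenspace_def, ← LinearMap.finrank_range_add_finrank_ker (ρ x - algebraMap K _ α),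
    add_comm]
  exact Nat.add_le_add_left hrank _

theorem stmt2_general (ρ : Representation K G V) [ρ.IsIrreducible] {x y : G}
    (hxy : x * y * x = y * x * y) (hgen : Subgroup.closure {x, y} = ⊤)
    (hss : End.IsSemisimple (ρ x)) (h3 : (spectrum K (ρ x)).ncard = 3) : finrank K V = 3 := by
  refine le_antisymm ?_ (h3 ▸ ncard_spectrum_le_finrank (ρ x))
  classical
  obtain ⟨α, β, γ, hαβ, hαγ, hβγ, hspec⟩ := Set.ncard_eq_three.1 h3
  have hα := finrank_le_finrank_eigenspace_add_two ρ hxy hgen hss hspec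
  have hβ := finrank_le_finrank_eigenspace_add_two ρ hxy hgen hss
    (hspec.trans (Set.insert_comm α β {γ}))
  have hγ := finrank_le_finrank_eigenspace_add_two ρ hxy hgen hss (α := γ) (β := α) (γ := β)
    (hspec.trans (by rw [Set.pair_comm β γ, Set.insert_comm α γ]))
  have hsum := sum_finrank_eigenspace_le_finrank (ρ x) {α, β, γ}
  rw [Finset.sum_insert (by simp [hαβ, hαγ]), Finset.sum_pair hβγ] at hsum
  omega

end ThreeEigenvalues

section SpecialLinearGroup

variable {n : ℕ}

/-- The lower unitriangular generator `[[1, 0], [-1, 1]]` of `SL(2, ℤ/nℤ)`, the partner of `tGen n`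
in the braid relation. -/
def lGen (n : ℕ) : SL2 n := ⟨!![1, 0; -1, 1], by simp [Matrix.det_fin_two_of]⟩

lemma coe_tGen_pow (k : ℕ) :
    ((tGen n ^ k : SL2 n) : Matrix (Fin 2) (Fin 2) (ZMod n)) = !![1, (k : ZMod n); 0, 1] := by
  induction k with
  | zero => simp [Matrix.one_fin_two]
  | succ k ih => rw [pow_succ, Matrix.SpecialLinearGroup.coe_mul, ih]; simp [tGen, add_comm]

lemma coe_lGen_pow (k : ℕ) :
    ((lGen n ^ k : SL2 n) : Matrix (Fin 2) (Fin 2) (ZMod n)) = !![1, 0; -(k : ZMod n), 1] := by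
  induction k with
  | zero => simp [Matrix.one_fin_two]
  | succ k ih => rw [pow_succ, Matrix.SpecialLinearGroup.coe_mul, ih]; simp [lGen, add_comm]

lemma coe_inv_garside_tGen_lGen (n : ℕ) :
    ((garside (tGen n) (lGen n))⁻¹ : SL2 n).1 = !![0, -1; 1, 0] := by
  rw [Matrix.SpecialLinearGroup.coe_inv, garside, Matrix.SpecialLinearGroup.coe_mul,
    Matrix.SpecialLinearGroup.coe_mul]
  simp [tGen, lGen, Matrix.adjugate_fin_two]

lemma lGen_pow_mul_apply_one_zero (k : ℕ) (g : SL2 n) :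
    (lGen n ^ k * g) 1 0 = g 1 0 - k * g 0 0 := by
  rw [Matrix.SpecialLinearGroup.coe_mul, coe_lGen_pow]
  simp [Matrix.mul_apply, sub_eq_neg_add]

lemma inv_garside_mul_tGen_pow_mul_apply_one_zero (k : ℕ) (g : SL2 n) :
    ((garside (tGen n) (lGen n))⁻¹ * tGen n ^ k * g) 1 0 = g 0 0 + k * g 1 0 := by
  rw [Matrix.SpecialLinearGroup.coe_mul, Matrix.SpecialLinearGroup.coe_mul, coe_tGen_pow,
    coe_inv_garside_tGen_lGen]
  simp [Matrix.mul_apply]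

lemma tGen_mul_lGen_mul_tGen (n : ℕ) : tGen n * lGen n * tGen n = lGen n * tGen n * lGen n := by
  apply Subtype.ext
  simp only [Matrix.SpecialLinearGroup.coe_mul]
  simp [tGen, lGen]

lemma tGen_pow_self (n : ℕ) : tGen n ^ n = 1 := by
  apply Subtype.ext
  rw [coe_tGen_pow]
  simp [Matrix.one_fin_two]

variable [NeZero n]

lemma exists_val_sub_mul_lt (a : ZMod n) {c : ZMod n} (hc : c ≠ 0) :
    ∃ q : ZMod n, (a - q * c).val < c.val := by
  refine ⟨(a.val / c.val : ℕ), ?_⟩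
  have hmod : a - (a.val / c.val : ℕ) * c = (a.val % c.val : ℕ) := by
    rw [sub_eq_iff_eq_add]
    nth_rw 1 [← ZMod.natCast_zmod_val a, ← Nat.mod_add_div' a.val c.val]
    simp
  have hlt : a.val % c.val < c.val := Nat.mod_lt _ ((ZMod.val_pos).2 hc)
  rwa [hmod, ZMod.val_natCast_of_lt (hlt.trans c.val_lt)]

lemma eq_tGen_pow_mul_inv_garside_mul_tGen_pow {g : SL2 n} (hg : g 1 0 = 1) :
    g = tGen n ^ (g 0 0).val * (garside (tGen n) (lGen n))⁻¹ * tGen n ^ (g 1 1).val := by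
  have hdet := Matrix.det_fin_two g.1
  rw [g.2, hg, mul_one] at hdet
  have hb : g 0 1 = g 0 0 * g 1 1 + -1 := by linear_combination hdet
  apply Subtype.ext
  rw [Matrix.SpecialLinearGroup.coe_mul, Matrix.SpecialLinearGroup.coe_mul, coe_tGen_pow,
    coe_tGen_pow, coe_inv_garside_tGen_lGen, Matrix.eta_fin_two g.1, hg, hb]
  simp [add_comm]

lemma mem_closure_of_apply_one_zero_eq_one {g : SL2 n} (hg : g 1 0 = 1) :
    g ∈ Subgroup.closure {tGen n, lGen n} := by
  have ht : tGen n ∈ Subgroup.closure {tGen n, lGen n} := subset_closure (by simp)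
  have hl : lGen n ∈ Subgroup.closure {tGen n, lGen n} := subset_closure (by simp)
  rw [eq_tGen_pow_mul_inv_garside_mul_tGen_pow hg]
  exact mul_mem (mul_mem (pow_mem ht _) (inv_mem (mul_mem (mul_mem ht hl) ht))) (pow_mem ht _)

lemma closure_tGen_lGen : Subgroup.closure {tGen n, lGen n} = ⊤ := by
  have ht : tGen n ∈ Subgroup.closure {tGen n, lGen n} := subset_closure (by simp)
  have hl : lGen n ∈ Subgroup.closure {tGen n, lGen n} := subset_closure (by simp)
  have hΔ : garside (tGen n) (lGen n) ∈ Subgroup.closure {tGen n, lGen n} :=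
    mul_mem (mul_mem ht hl) ht
  refine (eq_top_iff' _).2 fun g => ?_
  -- Euclidean algorithm on the first column, for the representatives in `[0, n)`
  induction hk : (g 1 0).val using Nat.strong_induction_on generalizing g with
  | _ k ih =>
    by_cases hc : g 1 0 = 0
    · have hdet := Matrix.det_fin_two g.1
      rw [g.2, hc] at hdet
      refine (mul_mem_cancel_left (pow_mem hl (-(g 1 1)).val)).1
        (mem_closure_of_apply_one_zero_eq_one ?_)
      rw [lGen_pow_mul_apply_one_zero, ZMod.natCast_zmod_val, hc]
      linear_combination -hdet
    · obtain ⟨q, hq⟩ := exists_val_sub_mul_lt (g 0 0) hc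
      refine (mul_mem_cancel_left (mul_mem (inv_mem hΔ) (pow_mem ht (-q).val))).1
        (ih _ ?_ _ rfl)
      rwa [inv_garside_mul_tGen_pow_mul_apply_one_zero, ZMod.natCast_zmod_val, neg_mul,
        ← sub_eq_add_neg, ← hk]

end SpecialLinearGroup

lemma IsIrreducibleRep.isIrreducible {G V : Type} [Group G] [AddCommGroup V] [Module ℂ V]
    {ρ : Representation ℂ G V} (h : IsIrreducibleRep ρ) : ρ.IsIrreducible := by
  have : Nontrivial (Subrepresentation ρ) :=
    have := h.1
    ⟨⊥, ⊤, fun hbt => bot_ne_top (α := Submodule ℂ V) (congrArg Subrepresentation.toSubmodule hbt)⟩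
  refine ⟨fun σ => ?_⟩
  refine (h.2 σ.toSubmodule fun g => ?_).imp (fun hσ => Subrepresentation.toSubmodule_injective hσ)
    fun hσ => Subrepresentation.toSubmodule_injective hσ
  exact Submodule.map_le_iff_le_comap.2 (σ.apply_mem_toSubmodule g)

/-- If `ρ` is an irreducible finite-dimensional complex representation of `SL(2, ℤ/nℤ)`
and `ρ(t)` has exactly three distinct eigenvalues, then `ρ` is three-dimensional. -/
theorem stmt2 (n : ℕ) (hn : 1 ≤ n)
    (V : Type) [AddCommGroup V] [Module ℂ V] [FiniteDimensional ℂ V]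
    (ρ : Representation ℂ (SL2 n) V)
    (hirr : IsIrreducibleRep ρ)
    (h3 : (spectrum ℂ (ρ (tGen n))).ncard = 3) :
    Module.finrank ℂ V = 3 := by
  have : NeZero n := ⟨by omega⟩
  have : ρ.IsIrreducible := hirr.isIrreducible
  have hpow : ρ (tGen n) ^ n = 1 := by rw [← map_pow, tGen_pow_self, map_one]
  exact stmt2_general ρ (tGen_mul_lGen_mul_tGen n) closure_tGen_lGen
    (isSemisimple_of_pow_eq_one (NeZero.ne _) hpow) h3
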